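/- Let (R, m, k) be a commutative Noetherian local ring with dim_k soc(R) > 1, where soc(R) = (0 :_R m). Then for every natural number N there exists an indecomposable R-module requiring at least N generators; in particular, R has infinitely many pairwise non-isomorphic finitely generated indecomposable modules. -/

import Mathlib

/-!
Let `x` and `y` be elements of a local ring, neither of which divides the other, and let `M` be the
cokernel of the Kronecker pencil `c ↦ x (c, 0) + y (0, c)` from `R ^ m` to `R ^ (m + 1)`. The
relations of `M` have entries in the maximal ideal `𝔪`, so `M` needs exactly `m + 1` generators.
Lift an endomorphism of `M` to `R ^ (m + 1)`. Since every relation `a x + b y = 0` has `a, b ∈ 𝔪`,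
comparing the coefficients of `x` and of `y` shows that, modulo `𝔪`, the matrix of the lift is
constant along its diagonals and vanishes in the first and last rows off the diagonal; hence it is
scalar. So every projection of `M` onto a direct summand is scalar modulo `𝔪 M`, and by Nakayama's
lemma it is `0` or the identity.
-/

open IsLocalRing Submodule

section Indecomposable

variable {R M : Type*} [CommRing R] [AddCommGroup M] [Module R M]

variable (R M) in
/-- A module is indecomposable if it is nonzero and is not the internal direct sum of two nonzero
submodules. -/
structure IsIndecomposableModule : Prop where
  nontrivial : Nontrivial M
  eq_bot_or_eq_bot : ∀ N₁ N₂ : Submodule R M, IsCompl N₁ N₂ → N₁ = ⊥ ∨ N₂ = ⊥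

lemma eq_bot_of_isCompl_of_le_smul_top [Module.Finite R M] {I : Ideal R}
    (hI : I ≤ Ideal.jacobson ⊥) {N₁ N₂ : Submodule R M} (h : IsCompl N₁ N₂)
    (hN₁ : N₁ ≤ I • (⊤ : Submodule R M)) : N₁ = ⊥ := by
  have hN₂ : ⊤ ≤ N₂ := le_of_le_smul_of_le_jacobson_bot Module.Finite.fg_top hI <| by
    rw [← h.symm.sup_eq_top]
    exact sup_le_sup_left (h.symm.sup_eq_top ▸ hN₁) N₂
  exact eq_bot_of_isCompl_top (top_le_iff.1 hN₂ ▸ h)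

lemma isIndecomposableModule_of_end_scalar_mod_maximalIdeal [IsLocalRing R] [Module.Finite R M]
    [Nontrivial M]
    (h : ∀ f : Module.End R M, ∃ r : R, ∀ z,
      f z - r • z ∈ maximalIdeal R • (⊤ : Submodule R M)) :
    IsIndecomposableModule R M where
  nontrivial := inferInstance
  eq_bot_or_eq_bot N₁ N₂ hN := by
    have hm : maximalIdeal R ≤ Ideal.jacobson ⊥ := maximalIdeal_le_jacobson ⊥
    obtain ⟨r, hr⟩ := h (N₁.projection N₂ hN)
    by_cases hrm : r ∈ maximalIdeal R
    · refine Or.inl (eq_bot_of_isCompl_of_le_smul_top hm hN fun z hz ↦ ?_)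
      have hsub := hr z
      rw [projection_apply_of_mem_left hN hz] at hsub
      exact (sub_mem_iff_left _ (smul_mem_smul hrm mem_top)).1 hsub
    · refine Or.inr (eq_bot_of_isCompl_of_le_smul_top hm hN.symm fun z hz ↦ ?_)
      have hsub := hr z
      rw [(projection_apply_eq_zero_iff hN).2 hz, zero_sub, neg_mem_iff] at hsub
      exact (smul_mem_iff_of_isUnit _ (notMem_maximalIdeal.1 hrm)).1 hsub

end Indecomposable

section SpanFinrank

variable {R M M' : Type*} [CommRing R] [AddCommGroup M] [Module R M]
  [AddCommGroup M'] [Module R M']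

lemma spanFinrank_top_eq_of_linearEquiv (e : M ≃ₗ[R] M') :
    (⊤ : Submodule R M).spanFinrank = (⊤ : Submodule R M').spanFinrank := by
  rw [← spanFinrank_map_eq_of_injective e.toLinearMap e.injective, Submodule.map_top, e.range]

lemma spanFinrank_top_le_card {s : Finset M} (hs : span R (s : Set M) = ⊤) :
    (⊤ : Submodule R M).spanFinrank ≤ s.card := by
  rw [← hs, ← Set.ncard_coe_finset]
  exact spanFinrank_span_le_ncard_of_finite s.finite_toSet

lemma spanFinrank_top_quotient_of_le_smul_top [Module.Finite R M] {I : Ideal R}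
    (hI : I ≤ Ideal.jacobson ⊥) {K : Submodule R M} (hK : K ≤ I • (⊤ : Submodule R M)) :
    (⊤ : Submodule R (M ⧸ K)).spanFinrank = (⊤ : Submodule R M).spanFinrank := by
  classical
  apply le_antisymm
  · have hle := spanFinrank_map_le_of_fg K.mkQ (Module.Finite.fg_top (R := R) (M := M))
    rwa [Submodule.map_top, range_mkQ] at hle
  · obtain ⟨s, hcard, hs⟩ :=
      (Module.Finite.fg_top (R := R) (M := M ⧸ K)).exists_span_finset_card_eq_spanFinrank
    let t : Finset M := s.image (Function.surjInv K.mkQ_surjective)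
    have hmap : (span R (t : Set M)).map K.mkQ = ⊤ := by
      rw [map_span, Finset.coe_image, ← Set.image_comp, Function.comp_surjInv, Set.image_id, hs]
    have hsup : span R (t : Set M) ⊔ K = ⊤ := by
      rw [sup_comm, ← comap_map_mkQ, hmap, comap_top]
    have ht : span R (t : Set M) = ⊤ := top_le_iff.1 <|
      le_of_le_smul_of_le_jacobson_bot Module.Finite.fg_top hI <|
        hsup.ge.trans (sup_le_sup_left hK _)
    calc (⊤ : Submodule R M).spanFinrank ≤ t.card := spanFinrank_top_le_card ht
      _ ≤ s.card := Finset.card_image_le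
      _ = (⊤ : Submodule R (M ⧸ K)).spanFinrank := hcard

end SpanFinrank

section Matrix

lemma toeplitz_apply_eq_zero_of_lt {α : Type*} [Zero α] {m : ℕ}
    {A : Matrix (Fin (m + 1)) (Fin (m + 1)) α}
    (hA : ∀ i j : Fin m, A i.succ j.succ = A i.castSucc j.castSucc)
    (hfirst : ∀ j : Fin m, A 0 j.succ = 0) {i j : Fin (m + 1)} (hij : i < j) : A i j = 0 := by
  induction i using Fin.induction generalizing j with
  | zero =>
    obtain ⟨j, rfl⟩ := Fin.exists_succ_eq.2 hij.ne'
    exact hfirst j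
  | succ i ih =>
    obtain ⟨j, rfl⟩ := Fin.exists_succ_eq.2 ((Fin.succ_pos i).trans hij).ne'
    rw [hA]
    exact ih (Fin.castSucc_lt_castSucc_iff.2 (Fin.succ_lt_succ_iff.1 hij))

lemma toeplitz_eq_diagonal {α : Type*} [Zero α] {m : ℕ}
    {A : Matrix (Fin (m + 1)) (Fin (m + 1)) α}
    (hA : ∀ i j : Fin m, A i.succ j.succ = A i.castSucc j.castSucc)
    (hfirst : ∀ j : Fin m, A 0 j.succ = 0)
    (hlast : ∀ j : Fin m, A (Fin.last m) j.castSucc = 0) :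
    A = Matrix.diagonal fun _ ↦ A 0 0 := by
  have hdiag (i : Fin (m + 1)) : A i i = A 0 0 := by
    induction i using Fin.induction with
    | zero => rfl
    | succ i ih => rw [hA, ih]
  ext i j
  rcases lt_trichotomy i j with hij | rfl | hij
  · rw [toeplitz_apply_eq_zero_of_lt hA hfirst hij, Matrix.diagonal_apply_ne _ hij.ne]
  · rw [hdiag, Matrix.diagonal_apply_eq]
  · have hrev := toeplitz_apply_eq_zero_of_lt (A := A.submatrix Fin.rev Fin.rev)
      (fun i j ↦ by simp [Fin.rev_succ, Fin.rev_castSucc, hA])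
      (fun j ↦ by simp [Fin.rev_succ, hlast]) (Fin.rev_lt_rev.2 hij)
    rw [Matrix.diagonal_apply_ne _ hij.ne', ← hrev, Matrix.submatrix_apply, Fin.rev_rev,
      Fin.rev_rev]

variable {R ι : Type*} [CommRing R] {I : Ideal R}

lemma pi_mem_smul_top [Finite ι] {v : ι → R} (hv : ∀ i, v i ∈ I) :
    v ∈ I • (⊤ : Submodule R (ι → R)) := by
  classical
  have := Fintype.ofFinite ι
  rw [pi_eq_sum_univ' v]
  exact sum_mem fun i _ ↦ smul_mem_smul (hv i) mem_top

lemma apply_sub_smul_mem_smul_top [Fintype ι] [DecidableEq ι] {g : Module.End R (ι → R)} {r : R}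
    (hg : (LinearMap.toMatrix' g).map (Ideal.Quotient.mk I) =
      Matrix.diagonal fun _ ↦ Ideal.Quotient.mk I r) (v : ι → R) :
    g v - r • v ∈ I • (⊤ : Submodule R (ι → R)) := by
  refine pi_mem_smul_top fun i ↦ Ideal.Quotient.eq.1 ?_
  rw [← LinearMap.toMatrix'_mulVec, RingHom.map_mulVec, hg, Matrix.mulVec_diagonal]
  exact (map_mul _ _ _).symm

end Matrix

section KroneckerPencil

open Function

variable {R : Type*} [CommRing R]

lemma extend_pi_single {ι η α : Type*} [DecidableEq ι] [DecidableEq η] [Zero α] {s : ι → η}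
    (hs : Injective s) (i : ι) (a : α) : extend s (Pi.single i a) 0 = Pi.single (s i) a := by
  ext k
  by_cases hk : ∃ j, s j = k
  · obtain ⟨j, rfl⟩ := hk
    simp only [hs.extend_apply, Pi.single_apply, hs.eq_iff]
  · rw [extend_apply' _ _ _ hk, Pi.single_eq_of_ne fun h ↦ hk ⟨i, h.symm⟩, Pi.zero_apply]

/-- The Kronecker pencil `c ↦ x (c, 0) + y (0, c)`, whose cokernels over a local ring are the
indecomposable modules sought when neither of `x` and `y` divides the other. The two shifts
`c ↦ (c, 0)` and `c ↦ (0, c)` are encoded as the extensions by zero along `Fin.castSucc` and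
`Fin.succ`. -/
noncomputable def kroneckerPencil (x y : R) (m : ℕ) : (Fin m → R) →ₗ[R] (Fin (m + 1) → R) :=
  x • ExtendByZero.linearMap R Fin.castSucc + y • ExtendByZero.linearMap R Fin.succ

lemma kroneckerPencil_apply (x y : R) {m : ℕ} (c : Fin m → R) :
    kroneckerPencil x y m c = x • extend Fin.castSucc c 0 + y • extend Fin.succ c 0 := rfl

lemma kroneckerPencil_single (x y : R) {m : ℕ} (j : Fin m) :
    kroneckerPencil x y m (Pi.single j 1) =
      x • Pi.single j.castSucc 1 + y • Pi.single j.succ 1 := by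
  rw [kroneckerPencil_apply, extend_pi_single (Fin.castSucc_injective m),
    extend_pi_single (Fin.succ_injective m)]

variable {I : Ideal R} {x y : R}

lemma range_kroneckerPencil_le_smul_top (hx : x ∈ I) (hy : y ∈ I) (m : ℕ) :
    (kroneckerPencil x y m).range ≤ I • (⊤ : Submodule R (Fin (m + 1) → R)) := by
  rintro _ ⟨c, rfl⟩
  exact add_mem (smul_mem_smul hx mem_top) (smul_mem_smul hy mem_top)

lemma mk_eq_mk_extend_of_smul_add_smul_eq_kroneckerPencil
    (hind : ∀ a b : R, a * x + b * y = 0 → a ∈ I ∧ b ∈ I) {m : ℕ} {u v : Fin (m + 1) → R}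
    {c : Fin m → R} (h : x • u + y • v = kroneckerPencil x y m c) (i : Fin (m + 1)) :
    Ideal.Quotient.mk I (u i) = Ideal.Quotient.mk I (extend Fin.castSucc c 0 i) ∧
      Ideal.Quotient.mk I (v i) = Ideal.Quotient.mk I (extend Fin.succ c 0 i) := by
  rw [Ideal.Quotient.eq, Ideal.Quotient.eq]
  apply hind
  have hi := congrFun h i
  simp only [kroneckerPencil_apply, Pi.add_apply, Pi.smul_apply, smul_eq_mul] at hi
  linear_combination hi

lemma kroneckerPencil_lift_eq_diagonal
    (hind : ∀ a b : R, a * x + b * y = 0 → a ∈ I ∧ b ∈ I) {m : ℕ}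
    {g : Module.End R (Fin (m + 1) → R)}
    (hg : ∀ c, g (kroneckerPencil x y m c) ∈ (kroneckerPencil x y m).range) :
    (LinearMap.toMatrix' g).map (Ideal.Quotient.mk I) =
      Matrix.diagonal fun _ ↦ Ideal.Quotient.mk I (LinearMap.toMatrix' g 0 0) := by
  choose c hc using fun j : Fin m ↦ hg (Pi.single j 1)
  have hrel (j : Fin m) : x • g (Pi.single j.castSucc 1) + y • g (Pi.single j.succ 1) =
      kroneckerPencil x y m (c j) := by
    rw [hc, kroneckerPencil_single, map_add, map_smul, map_smul]
  have hcoeff (j : Fin m) := mk_eq_mk_extend_of_smul_add_smul_eq_kroneckerPencil hind (hrel j)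
  have hlast (c : Fin m → R) : extend Fin.castSucc c 0 (Fin.last m) = 0 :=
    extend_apply' _ _ _ fun ⟨j, hj⟩ ↦ Fin.castSucc_ne_last j hj
  have hzero (c : Fin m → R) : extend Fin.succ c 0 0 = 0 :=
    extend_apply' _ _ _ fun ⟨j, hj⟩ ↦ Fin.succ_ne_zero j hj
  have hentry (i j : Fin (m + 1)) : (LinearMap.toMatrix' g).map (Ideal.Quotient.mk I) i j =
      Ideal.Quotient.mk I (g (Pi.single j 1) i) := by
    rw [Matrix.map_apply, LinearMap.toMatrix'_apply]
  refine toeplitz_eq_diagonal (fun i j ↦ ?_) (fun j ↦ ?_) fun j ↦ ?_ <;>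
    simp only [hentry, hcoeff]
  · rw [(Fin.succ_injective m).extend_apply, (Fin.castSucc_injective m).extend_apply]
  · rw [hzero, map_zero]
  · rw [hlast, map_zero]

lemma exists_end_sub_smul_mem_of_kroneckerPencil
    (hind : ∀ a b : R, a * x + b * y = 0 → a ∈ I ∧ b ∈ I) {m : ℕ}
    (f : Module.End R ((Fin (m + 1) → R) ⧸ (kroneckerPencil x y m).range)) :
    ∃ r : R, ∀ z, f z - r • z ∈
      I • (⊤ : Submodule R ((Fin (m + 1) → R) ⧸ (kroneckerPencil x y m).range)) := by
  let π := (kroneckerPencil x y m).range.mkQ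
  obtain ⟨g, hg⟩ := Module.projective_lifting_property π (f ∘ₗ π) (mkQ_surjective _)
  have hπ (v) : π (g v) = f (π v) := LinearMap.congr_fun hg v
  have hrange (c) : g (kroneckerPencil x y m c) ∈ (kroneckerPencil x y m).range := by
    rw [← ker_mkQ (kroneckerPencil x y m).range, LinearMap.mem_ker]
    have hc : π (kroneckerPencil x y m c) = 0 :=
      (Quotient.mk_eq_zero _).2 (LinearMap.mem_range_self _ c)
    exact (hπ _).trans (by rw [hc, map_zero])
  refine ⟨LinearMap.toMatrix' g 0 0, fun z ↦ ?_⟩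
  obtain ⟨v, rfl⟩ := mkQ_surjective _ z
  have hv := smul_top_le_comap_smul_top I π
    (apply_sub_smul_mem_smul_top (kroneckerPencil_lift_eq_diagonal hind hrange) v)
  rwa [mem_comap, map_sub, map_smul, hπ] at hv

end KroneckerPencil

section LocalRing

variable {R : Type*} [CommRing R] [IsLocalRing R]

lemma not_preValuationRing_iff_exists_relations_mem_maximalIdeal :
    ¬ PreValuationRing R ↔ ∃ x y : R, ∀ a b : R, a * x + b * y = 0 →
      a ∈ maximalIdeal R ∧ b ∈ maximalIdeal R := by
  constructor
  · intro hR
    obtain ⟨x, y, hxy, hyx⟩ : ∃ x y : R, ¬ x ∣ y ∧ ¬ y ∣ x := by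
      by_contra! h
      exact hR (PreValuationRing.iff_dvd_total.2 ⟨fun x y ↦ or_iff_not_imp_left.2 (h x y)⟩)
    refine ⟨x, y, fun a b hab ↦ ⟨fun ha ↦ hyx ?_, fun hb ↦ hxy ?_⟩⟩
    · exact ha.dvd_mul_left.1 ⟨-b, by linear_combination hab⟩
    · exact hb.dvd_mul_left.1 ⟨-a, by linear_combination hab⟩
  · rintro ⟨x, y, hind⟩ hR
    have hone : (1 : R) ∉ maximalIdeal R := (Ideal.ne_top_iff_one _).1 Ideal.IsPrime.ne_top'
    obtain ⟨c, rfl | rfl⟩ := hR.cond' x y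
    · exact hone (neg_mem_iff.1 (hind c (-1) (by ring)).2)
    · exact hone (neg_mem_iff.1 (hind (-1) c (by ring)).1)

variable {x y : R}

lemma spanFinrank_top_kroneckerPencil_cokernel (hx : x ∈ maximalIdeal R)
    (hy : y ∈ maximalIdeal R) (m : ℕ) :
    (⊤ : Submodule R ((Fin (m + 1) → R) ⧸ (kroneckerPencil x y m).range)).spanFinrank = m + 1 := by
  rw [spanFinrank_top_quotient_of_le_smul_top (maximalIdeal_le_jacobson ⊥)
    (range_kroneckerPencil_le_smul_top hx hy m), ← Module.finrank_eq_spanFinrank_of_free,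
    Module.finrank_fin_fun]

lemma isIndecomposableModule_kroneckerPencil_cokernel
    (hind : ∀ a b : R, a * x + b * y = 0 → a ∈ maximalIdeal R ∧ b ∈ maximalIdeal R) (m : ℕ) :
    IsIndecomposableModule R ((Fin (m + 1) → R) ⧸ (kroneckerPencil x y m).range) := by
  obtain ⟨hy, hx⟩ := hind y (-x) (by ring)
  have hrank := spanFinrank_top_kroneckerPencil_cokernel (neg_mem_iff.1 hx) hy m
  have : Nontrivial ((Fin (m + 1) → R) ⧸ (kroneckerPencil x y m).range) := by
    by_contra hM
    rw [not_nontrivial_iff_subsingleton] at hM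
    rw [Subsingleton.elim ⊤ ⊥, spanFinrank_bot] at hrank
    exact m.succ_ne_zero hrank.symm
  exact isIndecomposableModule_of_end_scalar_mod_maximalIdeal
    (exists_end_sub_smul_mem_of_kroneckerPencil hind)

end LocalRing

theorem stmt7_general (R : Type*) [CommRing R] [IsLocalRing R] (hR : ¬ PreValuationRing R) :
    (∀ N : ℕ, ∃ (n : ℕ) (K : Submodule R (Fin n → R)),
      Nontrivial ((Fin n → R) ⧸ K) ∧
      (∀ N₁ N₂ : Submodule R ((Fin n → R) ⧸ K), IsCompl N₁ N₂ → N₁ = ⊥ ∨ N₂ = ⊥) ∧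
      (∀ s : Finset ((Fin n → R) ⧸ K),
        Submodule.span R (s : Set ((Fin n → R) ⧸ K)) = ⊤ → N ≤ s.card)) ∧
    ∃ (d : ℕ → ℕ) (K : ∀ m : ℕ, Submodule R (Fin (d m) → R)),
      (∀ m, Nontrivial ((Fin (d m) → R) ⧸ K m) ∧
        ∀ N₁ N₂ : Submodule R ((Fin (d m) → R) ⧸ K m), IsCompl N₁ N₂ → N₁ = ⊥ ∨ N₂ = ⊥) ∧
      (∀ m m', m ≠ m' →
        IsEmpty (((Fin (d m) → R) ⧸ K m) ≃ₗ[R] ((Fin (d m') → R) ⧸ K m'))) := by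
  obtain ⟨x, y, hind⟩ := not_preValuationRing_iff_exists_relations_mem_maximalIdeal.1 hR
  obtain ⟨hy, hx⟩ := hind y (-x) (by ring)
  have hM := isIndecomposableModule_kroneckerPencil_cokernel hind
  have hrank := spanFinrank_top_kroneckerPencil_cokernel (neg_mem_iff.1 hx) hy
  refine ⟨fun N ↦ ⟨N + 1, (kroneckerPencil x y N).range, (hM N).nontrivial,
    (hM N).eq_bot_or_eq_bot, fun s hs ↦ ?_⟩, fun m ↦ m + 1, fun m ↦ (kroneckerPencil x y m).range,
    fun m ↦ ⟨(hM m).nontrivial, (hM m).eq_bot_or_eq_bot⟩, fun m m' hne ↦ ⟨fun e ↦ hne ?_⟩⟩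
  · exact N.le_succ.trans ((hrank N).ge.trans (spanFinrank_top_le_card hs))
  · have he := spanFinrank_top_eq_of_linearEquiv e
    rwa [hrank, hrank, Nat.add_right_cancel_iff] at he

/-- If `dim_k soc(R) > 1` (witnessed by two socle elements `x`, `y` linearly
independent over `k`), then for every `N` there is a finitely presented indecomposable
`R`-module requiring at least `N` generators; in particular there are infinitely many
pairwise non-isomorphic finitely generated indecomposable `R`-modules. -/
theorem stmt7 (R : Type*) [CommRing R] [IsNoetherianRing R] [IsLocalRing R]
    (x y : R)
    (hx : ∀ a ∈ IsLocalRing.maximalIdeal R, a * x = 0)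
    (hy : ∀ a ∈ IsLocalRing.maximalIdeal R, a * y = 0)
    (hind : ∀ a b : R, a * x + b * y = 0 →
      a ∈ IsLocalRing.maximalIdeal R ∧ b ∈ IsLocalRing.maximalIdeal R) :
    (∀ N : ℕ, ∃ (n : ℕ) (K : Submodule R (Fin n → R)),
      Nontrivial ((Fin n → R) ⧸ K) ∧
      (∀ N₁ N₂ : Submodule R ((Fin n → R) ⧸ K), IsCompl N₁ N₂ → N₁ = ⊥ ∨ N₂ = ⊥) ∧
      (∀ s : Finset ((Fin n → R) ⧸ K),
        Submodule.span R (s : Set ((Fin n → R) ⧸ K)) = ⊤ → N ≤ s.card)) ∧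
    ∃ (d : ℕ → ℕ) (K : ∀ m : ℕ, Submodule R (Fin (d m) → R)),
      (∀ m, Nontrivial ((Fin (d m) → R) ⧸ K m) ∧
        ∀ N₁ N₂ : Submodule R ((Fin (d m) → R) ⧸ K m), IsCompl N₁ N₂ → N₁ = ⊥ ∨ N₂ = ⊥) ∧
      (∀ m m', m ≠ m' →
        IsEmpty (((Fin (d m) → R) ⧸ K m) ≃ₗ[R] ((Fin (d m') → R) ⧸ K m'))) :=
  stmt7_general R (not_preValuationRing_iff_exists_relations_mem_maximalIdeal.2 ⟨x, y, hind⟩)
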